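/- If Λ² > ζ², the limiting loss density f(x) = (ζ/|Λ|)·φ((ζ·Φ⁻¹(x) − Σ·Φ⁻¹(p))/|Λ|)/φ(Φ⁻¹(x)) diverges at both endpoints: f(x) → ∞ as x → 0⁺ and f(x) → ∞ as x → 1⁻ (so the density is bimodal). -/

import Mathlib

open MeasureTheory ProbabilityTheory Real Filter Set

/-- The density of the standard normal distribution. -/
noncomputable def stdPdf (y : ℝ) : ℝ := Real.exp (-y ^ 2 / 2) / Real.sqrt (2 * Real.pi)

/-- The cumulative distribution function `Φ` of the standard normal distribution. -/
noncomputable def stdCdf (x : ℝ) : ℝ := ∫ y in Set.Iic x, stdPdf y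

/-- The inverse `Φ⁻¹` of the standard normal cumulative distribution function: since `stdCdf`
is injective, `stdCdfInv` is the genuine inverse of `Φ` on `(0,1)`. -/
noncomputable def stdCdfInv : ℝ → ℝ := Function.invFun stdCdf

/-!
With `y = Φ⁻¹(x)` and `m = ζ / |Λ| < 1`, the limiting density is a positive multiple of a ratio
`φ(m * y + k) / φ(y)`. Its logarithm is half of
`y ^ 2 - (m * y + k) ^ 2 = ((1 - m) * y - k) * ((1 + m) * y + k)`, a product of two affine functions
of positive slope, so the ratio diverges as `|y| → ∞`; and `Φ⁻¹` sends the endpoints of `(0, 1)` to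
`±∞`.
-/

open scoped Topology NNReal

section LeftInverse

variable {α β : Type*} [LinearOrder α] [LinearOrder β] [TopologicalSpace β]
  {F : α → β} {G : β → α} {s : Set β} {c : β}

lemma tendsto_atBot_of_leftInvOn_monotone [ClosedIciTopology β] (hF : Monotone F)
    (hG : LeftInvOn F G s) (hc : ∀ a, c < F a) : Tendsto G (𝓝[s] c) atBot := by
  refine tendsto_atBot.2 fun a ↦ ?_
  filter_upwards [self_mem_nhdsWithin, nhdsWithin_le_nhds (eventually_lt_nhds (hc a))]
    with x hx hxa
  exact (hF.reflect_lt ((hG hx).trans_lt hxa)).le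

lemma tendsto_atTop_of_leftInvOn_monotone [ClosedIicTopology β] (hF : Monotone F)
    (hG : LeftInvOn F G s) (hc : ∀ a, F a < c) : Tendsto G (𝓝[s] c) atTop :=
  tendsto_atBot_of_leftInvOn_monotone (α := αᵒᵈ) (β := βᵒᵈ) hF.dual hG hc

end LeftInverse

section Cdf

variable (μ : Measure ℝ) [IsProbabilityMeasure μ]

lemma cdf_pos [μ.IsOpenPosMeasure] (x : ℝ) : 0 < cdf μ x := by
  rw [cdf_eq_real]
  have hIic : 0 < μ (Iic x) :=
    (Measure.measure_Iio_pos μ x).trans_le (measure_mono Iio_subset_Iic_self)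
  exact ENNReal.toReal_pos hIic.ne' (measure_ne_top μ _)

lemma cdf_lt_one [μ.IsOpenPosMeasure] (x : ℝ) : cdf μ x < 1 := by
  have hIoi : 0 < μ.real (Iic x)ᶜ := by
    rw [compl_Iic]
    exact ENNReal.toReal_pos (Measure.measure_Ioi_pos μ x).ne' (measure_ne_top μ _)
  rw [probReal_compl_eq_one_sub measurableSet_Iic, ← cdf_eq_real] at hIoi
  exact sub_pos.1 hIoi

lemma continuous_cdf [NullSingletonClass μ] : Continuous (cdf μ) := by
  refine continuous_iff_continuousAt.2 fun x ↦ ?_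
  have hjump : cdf μ x - Function.leftLim (cdf μ) x ≤ 0 := by
    rw [← ENNReal.ofReal_eq_zero, ← StieltjesFunction.measure_singleton, measure_cdf,
      measure_singleton]
  rw [(monotone_cdf μ).continuousAt_iff_leftLim_eq_rightLim, StieltjesFunction.rightLim_eq]
  exact le_antisymm ((monotone_cdf μ).leftLim_le le_rfl) (sub_nonpos.1 hjump)

lemma leftInvOn_cdf_invFun [NullSingletonClass μ] :
    LeftInvOn (cdf μ) (Function.invFun (cdf μ)) (Ioo 0 1) := by
  have hrange : Ioo 0 1 ⊆ cdf μ '' univ :=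
    isPreconnected_univ.intermediate_value_Ioo (by simp) (by simp) (continuous_cdf μ).continuousOn
      (tendsto_cdf_atBot μ) (tendsto_cdf_atTop μ)
  rw [image_univ] at hrange
  exact fun x hx ↦ Function.invFun_eq (hrange hx)

lemma tendsto_invFun_cdf_atBot [NullSingletonClass μ] [μ.IsOpenPosMeasure] :
    Tendsto (Function.invFun (cdf μ)) (𝓝[Ioo 0 1] 0) atBot :=
  tendsto_atBot_of_leftInvOn_monotone (monotone_cdf μ) (leftInvOn_cdf_invFun μ) (cdf_pos μ)

lemma tendsto_invFun_cdf_atTop [NullSingletonClass μ] [μ.IsOpenPosMeasure] :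
    Tendsto (Function.invFun (cdf μ)) (𝓝[Ioo 0 1] 1) atTop :=
  tendsto_atTop_of_leftInvOn_monotone (monotone_cdf μ) (leftInvOn_cdf_invFun μ) (cdf_lt_one μ)

end Cdf

section GaussianRatio

lemma tendsto_affine_mul_affine_cocompact {a c : ℝ} (ha : 0 < a) (hc : 0 < c) (b d : ℝ) :
    Tendsto (fun y ↦ (a * y + b) * (c * y + d)) (cocompact ℝ) atTop := by
  rw [cocompact_eq_atBot_atTop, tendsto_sup]
  constructor
  · exact (tendsto_atBot_add_const_right _ b (tendsto_id.const_mul_atBot ha)).atBot_mul_atBot₀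
      (tendsto_atBot_add_const_right _ d (tendsto_id.const_mul_atBot hc))
  · exact (tendsto_atTop_add_const_right _ b (tendsto_id.const_mul_atTop ha)).atTop_mul_atTop₀
      (tendsto_atTop_add_const_right _ d (tendsto_id.const_mul_atTop hc))

variable (μ : ℝ) {v : ℝ≥0}

lemma gaussianPDFReal_div_gaussianPDFReal (hv : v ≠ 0) (x y : ℝ) :
    gaussianPDFReal μ v x / gaussianPDFReal μ v y =
      Real.exp (((y - μ) ^ 2 - (x - μ) ^ 2) / (2 * v)) := by
  have hnorm : (√(2 * π * v))⁻¹ ≠ 0 := by positivity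
  simp only [gaussianPDFReal]
  rw [mul_div_mul_left _ _ hnorm, ← Real.exp_sub]
  ring_nf

lemma tendsto_gaussianPDFReal_affine_div_cocompact (hv : v ≠ 0) {m : ℝ} (hm : |m| < 1) (k : ℝ) :
    Tendsto (fun y ↦ gaussianPDFReal μ v (m * y + k) / gaussianPDFReal μ v y)
      (cocompact ℝ) atTop := by
  obtain ⟨hm₁, hm₂⟩ := abs_lt.1 hm
  have hfactor (y : ℝ) : (y - μ) ^ 2 - (m * y + k - μ) ^ 2 =
      ((1 - m) * y + -k) * ((1 + m) * y + (k - 2 * μ)) := by ring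
  simp only [gaussianPDFReal_div_gaussianPDFReal μ hv, hfactor]
  have hprod := tendsto_affine_mul_affine_cocompact (sub_pos.2 hm₂)
    (neg_lt_iff_pos_add'.1 hm₁) (-k) (k - 2 * μ)
  exact Real.tendsto_exp_atTop.comp (hprod.atTop_div_const (by positivity))

end GaussianRatio

lemma isOpenPosMeasure_gaussianReal (μ : ℝ) {v : ℝ≥0} (hv : v ≠ 0) :
    (gaussianReal μ v).IsOpenPosMeasure :=
  (gaussianReal_absolutelyContinuous' μ hv).isOpenPosMeasure

lemma stdPdf_eq_gaussianPDFReal : stdPdf = gaussianPDFReal 0 1 := by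
  ext y
  simp [stdPdf, gaussianPDFReal, div_eq_inv_mul]

lemma stdCdf_eq_cdf : stdCdf = cdf (gaussianReal 0 1) := by
  ext x
  rw [cdf_eq_real, measureReal_def, gaussianReal_apply_eq_integral _ one_ne_zero,
    ENNReal.toReal_ofReal (integral_nonneg (gaussianPDFReal_nonneg 0 1)), stdCdf,
    stdPdf_eq_gaussianPDFReal]

lemma tendsto_stdCdfInv_atBot : Tendsto stdCdfInv (𝓝[Ioo 0 1] 0) atBot := by
  have := isOpenPosMeasure_gaussianReal 0 one_ne_zero
  have := nullSingletonClass_gaussianReal (μ := 0) one_ne_zero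
  rw [stdCdfInv, stdCdf_eq_cdf]
  exact tendsto_invFun_cdf_atBot _

lemma tendsto_stdCdfInv_atTop : Tendsto stdCdfInv (𝓝[Ioo 0 1] 1) atTop := by
  have := isOpenPosMeasure_gaussianReal 0 one_ne_zero
  have := nullSingletonClass_gaussianReal (μ := 0) one_ne_zero
  rw [stdCdfInv, stdCdf_eq_cdf]
  exact tendsto_invFun_cdf_atTop _

lemma tendsto_stdPdf_affine_div_cocompact {m : ℝ} (hm : |m| < 1) (k : ℝ) :
    Tendsto (fun y ↦ stdPdf (m * y + k) / stdPdf y) (cocompact ℝ) atTop := by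
  rw [stdPdf_eq_gaussianPDFReal]
  exact tendsto_gaussianPDFReal_affine_div_cocompact 0 one_ne_zero hm k

/-- if `Λ² > ζ²`, the limiting loss density diverges to `+∞` at both endpoints
of `(0,1)` (so the density is bimodal). -/
theorem limiting_density_bimodal
    (Sg ζ Λ p : ℝ)
    (hSg : 0 < Sg) (hζ : 0 < ζ) (hΛ : Λ ≠ 0) (hp : p ∈ Set.Ioo (0 : ℝ) 1)
    (f : ℝ → ℝ)
    (hf : ∀ x ∈ Set.Ioo (0 : ℝ) 1,
      f x = (ζ / |Λ|) * stdPdf ((ζ * stdCdfInv x - Sg * stdCdfInv p) / |Λ|)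
              / stdPdf (stdCdfInv x))
    (hcase : ζ ^ 2 < Λ ^ 2) :
    Filter.Tendsto f (nhdsWithin 0 (Set.Ioo 0 1)) Filter.atTop ∧
    Filter.Tendsto f (nhdsWithin 1 (Set.Ioo 0 1)) Filter.atTop := by
  have hslope_pos : 0 < ζ / |Λ| := by positivity
  have hslope : |(ζ / |Λ|)| < 1 := by
    rw [abs_div, abs_abs, div_lt_one (by positivity)]
    exact sq_lt_sq.1 hcase
  set k := -(Sg * stdCdfInv p) / |Λ| with hk
  have hratio : Tendsto (fun y ↦ ζ / |Λ| * (stdPdf (ζ / |Λ| * y + k) / stdPdf y))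
      (cocompact ℝ) atTop :=
    (tendsto_stdPdf_affine_div_cocompact hslope k).const_mul_atTop hslope_pos
  have hf_ratio : EqOn (fun x ↦ ζ / |Λ| *
      (stdPdf (ζ / |Λ| * stdCdfInv x + k) / stdPdf (stdCdfInv x))) f (Ioo 0 1) := by
    intro x hx
    have harg : ζ / |Λ| * stdCdfInv x + k = (ζ * stdCdfInv x - Sg * stdCdfInv p) / |Λ| := by
      rw [hk]; ring
    simp only [hf x hx, harg, mul_div_assoc]
  rw [cocompact_eq_atBot_atTop, tendsto_sup] at hratio
  exact ⟨(hratio.1.comp tendsto_stdCdfInv_atBot).congr' hf_ratio.eventuallyEq_nhdsWithin,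
    (hratio.2.comp tendsto_stdCdfInv_atTop).congr' hf_ratio.eventuallyEq_nhdsWithin⟩
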